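/- Let ℓ_1, ..., ℓ_n be nonzero linear forms in K[x_1,...,x_k], where repetitions and proportional forms are allowed. Then the quotient T/⟨ℓ_1 y_1, ℓ_2 y_2, ..., ℓ_n y_n⟩ has depth at least k with respect to the graded maximal ideal ⟨x_1,...,x_k,y_1,...,y_n⟩: there exists a regular sequence of length k on T/⟨ℓ_1 y_1,...,ℓ_n y_n⟩ consisting of elements of ⟨x_1,...,x_k,y_1,...,y_n⟩ (equivalently, the projective dimension of this quotient over T is at most n). -/

import Mathlib

set_option synthInstance.maxHeartbeats 1000000
set_option maxHeartbeats 1000000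

open MvPolynomial Finset

/-!
By Rees' theorem, a finite module `M` over a Noetherian ring `R` with `I M ≠ M` contains an
`M`-regular sequence of length `d` in `I` if and only if `Ext^i(R/I, M) = 0` for all `i < d`. In
this form a lower bound on the depth passes from the outer terms of the exact sequence
`0 → R/(J : y) → R/J → R/(J + (y)) → 0` to the middle one.

Take `J` to be generated by one product `ℓ_i y_i` and an ideal `J'` whose generators do not involve
`y_i`. Then `y_i` is a nonzerodivisor modulo `J'`, so `J : y_i = J' + (ℓ_i)`, and the generator
`ℓ_i y_i` may be replaced by `ℓ_i` and by `y_i` in turn. Splitting all the products leaves quotients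
of a polynomial ring in `k + n` variables by `n` linear forms, and these have depth at least `k`.
-/

universe u

section Depth

open CategoryTheory Abelian RingTheory.Sequence

variable {R : Type u} [CommRing R] {I : Ideal R}

/-- The `I`-depth of `M` is at least `n`, encoded as the vanishing of `Ext^i(R/I, M)` for `i < n`.
For `M` finite over a Noetherian ring `R` with `I M ≠ M`, this says that `I` contains an
`M`-regular sequence of length `n`. -/
def HasDepthAtLeast (I : Ideal R) (M : Type u) [AddCommGroup M] [Module R M] (n : ℕ) : Prop :=
  ∀ i < n, Subsingleton (Ext (ModuleCat.of R (R ⧸ I)) (ModuleCat.of R M) i)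

namespace HasDepthAtLeast

variable {M M₁ M₂ M₃ : Type u} [AddCommGroup M] [Module R M] [AddCommGroup M₁] [Module R M₁]
  [AddCommGroup M₂] [Module R M₂] [AddCommGroup M₃] [Module R M₃] {m n : ℕ}

theorem mono (h : HasDepthAtLeast I M n) (hmn : m ≤ n) : HasDepthAtLeast I M m :=
  fun i hi ↦ h i (hi.trans_le hmn)

theorem of_exact (h₁ : HasDepthAtLeast I M₁ n) (h₃ : HasDepthAtLeast I M₃ n)
    {f : M₁ →ₗ[R] M₂} {g : M₂ →ₗ[R] M₃} (hf : Function.Injective f) (hfg : Function.Exact f g)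
    (hg : Function.Surjective g) : HasDepthAtLeast I M₂ n := by
  intro i hi
  have hS := ModuleCat.shortComplex_shortExact
    (ModuleCat.shortComplexOfCompEqZero f g hfg.linearMap_comp_eq_zero) hfg hf hg
  refine subsingleton_of_forall_eq 0 fun x ↦ ?_
  obtain ⟨y, rfl⟩ := Ext.covariant_sequence_exact₂ _ hS x ((h₃ i hi).elim _ _)
  rw [(h₁ i hi).elim y 0, Ext.zero_comp]

theorem of_isWeaklyRegular [IsNoetherianRing R] [Module.Finite R M]
    (hIM : I • (⊤ : Submodule R M) ≠ ⊤) {rs : List R} (hrs : IsWeaklyRegular M rs)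
    (hmem : ∀ r ∈ rs, r ∈ I) : HasDepthAtLeast I M rs.length := by
  have hle : Ideal.ofList rs ≤ I := Ideal.span_le.mpr hmem
  refine ModuleCat.subsingleton_ext_of_exists_isRegular I (ModuleCat.of R (R ⧸ I)) ?_
    (ModuleCat.of R M) hIM.lt_top rs hmem
    ⟨hrs, fun h ↦ hIM (top_unique (h.trans_le (Submodule.smul_mono_left hle)))⟩
  rw [Module.support_eq_zeroLocus, Ideal.annihilator_quotient]

theorem exists_isRegular [IsNoetherianRing R] [Module.Finite R M]
    (hIM : I • (⊤ : Submodule R M) ≠ ⊤) (h : HasDepthAtLeast I M n) :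
    ∃ rs : List R, rs.length = n ∧ (∀ r ∈ rs, r ∈ I) ∧ IsRegular M rs :=
  ModuleCat.exists_isRegular_of_exists_subsingleton_ext I n (ModuleCat.of R M) hIM.lt_top
    (ModuleCat.of R (R ⧸ I)) (by rw [Module.support_eq_zeroLocus, Ideal.annihilator_quotient]) h

variable {J : Ideal R}

theorem quotient_of_colon (y : R) (hcolon : HasDepthAtLeast I (R ⧸ J.colon {y}) n)
    (hsup : HasDepthAtLeast I (R ⧸ Ideal.span {y} ⊔ J) n) : HasDepthAtLeast I (R ⧸ J) n := by
  have hcomap : J.colon {y} = Submodule.comap (LinearMap.mulRight R y) J := by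
    ext r
    exact Submodule.mem_colon_singleton
  have hrange : LinearMap.range (LinearMap.mulRight R y) = Ideal.span {y} := by
    ext r
    simp [Ideal.mem_span_singleton', eq_comm]
  refine hcolon.of_exact hsup (f := Submodule.mapQ _ _ (LinearMap.mulRight R y) hcomap.le)
    (g := Submodule.factor le_sup_right) ?_ ?_ (Submodule.factor_surjective _)
  · rw [← LinearMap.ker_eq_bot, Submodule.ker_mapQ, ← hcomap, Submodule.mkQ_map_self]
  · rw [LinearMap.exact_iff, Submodule.range_mapQ, hrange, Submodule.ker_mapQ,
      Submodule.comap_id, Submodule.map_sup, Submodule.mkQ_map_self, sup_bot_eq]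

theorem quotient_span_mul_sup {a y : R} (hy : IsSMulRegular (R ⧸ J) y)
    (ha : HasDepthAtLeast I (R ⧸ Ideal.span {a} ⊔ J) n)
    (hsup : HasDepthAtLeast I (R ⧸ Ideal.span {y} ⊔ J) n) :
    HasDepthAtLeast I (R ⧸ Ideal.span {a * y} ⊔ J) n := by
  have hcolon : (Ideal.span {a * y} ⊔ J).colon {y} = Ideal.span {a} ⊔ J := by
    ext r
    simp only [Submodule.mem_colon_singleton, smul_eq_mul, Ideal.mem_span_singleton_sup]
    constructor
    · rintro ⟨c, j, hj, h⟩
      refine ⟨c, r - c * a, mem_of_isSMulRegular_quotient_of_smul_mem hy ?_, by ring⟩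
      rwa [smul_eq_mul, show y * (r - c * a) = j by linear_combination -h]
    · rintro ⟨c, j, hj, rfl⟩
      exact ⟨c, j * y, J.mul_mem_right y hj, by ring⟩
  have hspan : Ideal.span {y} ⊔ (Ideal.span {a * y} ⊔ J) = Ideal.span {y} ⊔ J := by
    rw [← sup_assoc, sup_eq_left.mpr
      (Ideal.span_singleton_le_span_singleton.mpr (dvd_mul_left y a))]
  exact quotient_of_colon y (by rwa [hcolon]) (by rwa [hspan])

end HasDepthAtLeast

theorem smul_top_quotient_ne_top {J : Ideal R} (hJI : J ≤ I) (hI : I ≠ ⊤) :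
    I • (⊤ : Submodule R (R ⧸ J)) ≠ ⊤ := by
  intro h
  have hcomap := congrArg (Submodule.comap J.mkQ) h
  rw [← Submodule.range_mkQ J, ← Submodule.map_top, ← Submodule.map_smul'',
    Submodule.comap_map_mkQ, smul_eq_mul, Ideal.mul_top, sup_eq_right.mpr hJI, Submodule.map_top,
    Submodule.range_mkQ, Submodule.comap_top] at hcomap
  exact hI hcomap

end Depth

section Variables

open RingTheory.Sequence

variable {σ R : Type*}

theorem mul_X_divMonomial_single_of_ne [CommSemiring R] {i j : σ} (hij : j ≠ i)
    (q : MvPolynomial σ R) :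
    (q * X j).divMonomial (Finsupp.single i 1) = q.divMonomial (Finsupp.single i 1) * X j := by
  classical
  ext e
  have hsupp : j ∈ (Finsupp.single i 1 + e).support ↔ j ∈ e.support := by
    simp [hij]
  have hsub : Finsupp.single i 1 + e - Finsupp.single j 1 =
      Finsupp.single i 1 + (e - Finsupp.single j 1) := by
    ext k
    obtain rfl | hk := eq_or_ne k i <;> simp [*]
  simp only [coeff_divMonomial, coeff_mul_X', hsupp, hsub]

theorem mul_divMonomial_single_of_mem_supported [CommSemiring R] {i : σ}
    {p : MvPolynomial σ R} (hp : p ∈ supported R {i}ᶜ) (q : MvPolynomial σ R) :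
    (q * p).divMonomial (Finsupp.single i 1) = q.divMonomial (Finsupp.single i 1) * p := by
  induction hp using Algebra.adjoin_induction generalizing q with
  | mem _ hx =>
    obtain ⟨j, hj, rfl⟩ := hx
    exact mul_X_divMonomial_single_of_ne hj q
  | algebraMap r =>
    ext e
    simp only [algebraMap_eq, mul_comm _ (C r), coeff_divMonomial, coeff_C_mul]
  | add _ _ _ _ hx hy => simp only [mul_add, add_divMonomial, hx, hy]
  | mul _ _ _ _ hx hy => rw [← mul_assoc, hy, hx, mul_assoc]

theorem isSMulRegular_X_quotient_span [CommRing R] {i : σ} {S : Set (MvPolynomial σ R)}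
    (hS : S ⊆ supported R {i}ᶜ) :
    IsSMulRegular (MvPolynomial σ R ⧸ Ideal.span S) (X i : MvPolynomial σ R) := by
  have hdiv : ∀ p ∈ Ideal.span S, p.divMonomial (Finsupp.single i 1) ∈ Ideal.span S := by
    intro p hp
    induction hp using Submodule.closure_induction with
    | zero => rw [zero_divMonomial]; exact zero_mem _
    | add p q _ _ hp hq => rw [add_divMonomial]; exact add_mem hp hq
    | smul_mem q p hp =>
      rw [smul_eq_mul, mul_divMonomial_single_of_mem_supported (hS hp)]
      exact Ideal.mul_mem_left _ _ (Ideal.subset_span hp)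
  refine (isSMulRegular_quotient_iff_mem_of_smul_mem _ _).mpr fun p hp ↦ ?_
  simpa only [smul_eq_mul, X_mul_divMonomial] using hdiv _ hp

theorem isWeaklyRegular_map_X [CommRing R] {l : List σ} (hl : l.Nodup) :
    IsWeaklyRegular (MvPolynomial σ R) (l.map X : List (MvPolynomial σ R)) := by
  refine ⟨fun i hi ↦ ?_⟩
  rw [smul_eq_mul, Ideal.mul_top, List.getElem_map]
  refine isSMulRegular_X_quotient_span fun p hp ↦ Algebra.subset_adjoin ?_
  rw [Set.mem_ofPred, ← List.map_take, List.mem_map] at hp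
  obtain ⟨j, hj, rfl⟩ := hp
  refine ⟨j, ?_, rfl⟩
  rintro rfl
  obtain ⟨k, hk, hkj⟩ := List.mem_take_iff_getElem.mp hj
  rw [hl.getElem_inj_iff] at hkj
  omega

end Variables

section SymmetricAlgebra

open RingTheory.Sequence

variable {R V A : Type*} [CommRing R] [AddCommGroup V] [Module R V] [CommRing A] [Algebra R A]

theorem isWeaklyRegular_map_basis {κ : Type*} {f : V →ₗ[R] A} (hf : IsSymmetricAlgebra f)
    (b : Module.Basis κ R V) {l : List κ} (hl : l.Nodup) :
    IsWeaklyRegular A (l.map (f ∘ b)) := by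
  let e : MvPolynomial κ R ≃ₐ[R] A := (SymmetricAlgebra.equivMvPolynomial b).symm.trans hf.equiv
  have he (i : κ) : e (X i) = f (b i) := by
    simp [e]
  refine (e.toAddEquiv.isWeaklyRegular_congr ?_).mp (isWeaklyRegular_map_X hl)
  rw [List.forall₂_map_left_iff, List.forall₂_map_right_iff, List.forall₂_same]
  intro i _ p
  simp [he]

theorem ideal_span_image_span (f : V →ₗ[R] A) (s : Set V) :
    Ideal.span (f '' Submodule.span R s) = Ideal.span (f '' s) := by
  rw [← Submodule.map_coe, Submodule.map_span]
  exact Submodule.span_span_of_tower R A _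

end SymmetricAlgebra

section LinearForms

open RingTheory.Sequence

variable {K V : Type*} {A : Type u} [Field K] [AddCommGroup V] [Module K V]
  [FiniteDimensional K V] [CommRing A] [IsNoetherianRing A] [Algebra K A] {f : V →ₗ[K] A}
  {I : Ideal A}

theorem hasDepthAtLeast_quotient_span_image (hf : IsSymmetricAlgebra f) (hI : I ≠ ⊤)
    (hfI : ∀ v, f v ∈ I) (U : Submodule K V) :
    HasDepthAtLeast I (A ⧸ Ideal.span (f '' U)) (Module.finrank K (V ⧸ U)) := by
  obtain ⟨W, hUW⟩ := U.exists_isCompl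
  let bU := Module.finBasis K U
  let bW := Module.finBasis K W
  let b := (bU.prod bW).map (U.prodEquivOfIsCompl W hUW)
  let lU := (List.finRange (Module.finrank K U)).map (Sum.inl (β := Fin (Module.finrank K W)))
  let lW := (List.finRange (Module.finrank K W)).map (Sum.inr (α := Fin (Module.finrank K U)))
  have hnodup : (lU ++ lW).Nodup :=
    ((List.nodup_finRange _).map Sum.inl_injective).append
      ((List.nodup_finRange _).map Sum.inr_injective) (by simp [lW, List.disjoint_left])
  have hregular := isWeaklyRegular_map_basis hf b hnodup
  have hspan : Ideal.ofList (lU.map (f ∘ b)) • (⊤ : Ideal A) = Ideal.span (f '' U) := by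
    have hmem : {x | x ∈ lU.map (f ∘ b)} = f '' Set.range (U.subtype ∘ bU) := by
      ext x
      simp [lU, b]
    have hU : Submodule.span K (Set.range (U.subtype ∘ bU)) = U := by
      rw [Set.range_comp, Submodule.span_image, bU.span_eq, Submodule.map_top,
        Submodule.range_subtype]
    rw [smul_eq_mul, Ideal.mul_top, Ideal.ofList, hmem, ← ideal_span_image_span, hU]
  rw [List.map_append, isWeaklyRegular_append_iff, hspan] at hregular
  have hlength : (lW.map (f ∘ b)).length = Module.finrank K (V ⧸ U) := by
    simp [lW, (U.quotientEquivOfIsCompl W hUW).finrank_eq]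
  rw [← hlength]
  refine .of_isWeaklyRegular (smul_top_quotient_ne_top ?_ hI) hregular.2 ?_
  · exact Ideal.span_le.mpr (Set.image_subset_iff.mpr fun v _ ↦ hfI v)
  · simp only [List.forall_mem_map]
    exact fun i _ ↦ hfI (b i)

theorem hasDepthAtLeast_quotient_span_range {ι : Type*} [Fintype ι] (hf : IsSymmetricAlgebra f)
    (hI : I ≠ ⊤) (hfI : ∀ v, f v ∈ I) (v : ι → V) :
    HasDepthAtLeast I (A ⧸ Ideal.span (Set.range (f ∘ v)))
      (Module.finrank K V - Fintype.card ι) := by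
  rw [Set.range_comp, ← ideal_span_image_span]
  refine (hasDepthAtLeast_quotient_span_image hf hI hfI _).mono ?_
  rw [Submodule.finrank_quotient]
  exact Nat.sub_le_sub_left (finrank_range_le_card v) _

end LinearForms

section ProductGenerators

theorem ideal_span_range_update {R ι : Type*} [Semiring R] [DecidableEq ι] (g : ι → R) (i : ι)
    (z : R) :
    Ideal.span (Set.range (Function.update g i z)) = Ideal.span {z} ⊔ Ideal.span (g '' {i}ᶜ) := by
  rw [← Ideal.span_union, ← Set.image_univ, ← Set.union_compl_self {i}, Set.image_union,
    Set.image_singleton, Function.update_self]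
  congr 2
  exact Set.image_congr fun j hj ↦ Function.update_of_ne hj z g

theorem hasDepthAtLeast_quotient_span_range_mul {R : Type u} {ι : Type*} [CommRing R] [Finite ι]
    {I : Ideal R} {n : ℕ} {a y : ι → R}
    (hy : ∀ i g, (∀ j, g j = a j * y j ∨ g j = a j ∨ g j = y j) →
      IsSMulRegular (R ⧸ Ideal.span (g '' {i}ᶜ)) (y i))
    (h : ∀ g : ι → R, (∀ j, g j = a j ∨ g j = y j) →
      HasDepthAtLeast I (R ⧸ Ideal.span (Set.range g)) n) :
    HasDepthAtLeast I (R ⧸ Ideal.span (Set.range (a * y))) n := by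
  classical
  have := Fintype.ofFinite ι
  suffices hpartial : ∀ (s : Finset ι) (g : ι → R), (∀ j ∈ s, g j = a j * y j) →
      (∀ j ∉ s, g j = a j ∨ g j = y j) → HasDepthAtLeast I (R ⧸ Ideal.span (Set.range g)) n from
    hpartial univ (a * y) (fun _ _ ↦ rfl) (fun j hj ↦ absurd (mem_univ j) hj)
  intro s
  induction s using Finset.induction_on with
  | empty => exact fun g _ hg ↦ h g fun j ↦ hg j (notMem_empty j)
  | insert i s hi ih =>
    intro g hmul hsplit
    have hstep (z : R) (hz : z = a i ∨ z = y i) :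
        HasDepthAtLeast I (R ⧸ Ideal.span {z} ⊔ Ideal.span (g '' {i}ᶜ)) n := by
      rw [← ideal_span_range_update]
      refine ih _ (fun j hj ↦ ?_) (fun j hj ↦ ?_)
      · rw [Function.update_of_ne (ne_of_mem_of_not_mem hj hi)]
        exact hmul j (mem_insert_of_mem hj)
      · obtain rfl | hji := eq_or_ne j i
        · rwa [Function.update_self]
        · rw [Function.update_of_ne hji]
          exact hsplit j (by simp [hji, hj])
    have hg (j : ι) : g j = a j * y j ∨ g j = a j ∨ g j = y j := by
      by_cases hj : j ∈ insert i s
      · exact .inl (hmul j hj)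
      · exact .inr (hsplit j hj)
    rw [← Function.update_eq_self i g, ideal_span_range_update, hmul i (mem_insert_self i s)]
    exact .quotient_span_mul_sup (hy i g hg) (hstep _ (.inl rfl)) (hstep _ (.inr rfl))

theorem hasDepthAtLeast_quotient_span_range_C_mul_X {S ι : Type*} [CommRing S] [Finite ι]
    {I : Ideal (MvPolynomial ι S)} {n : ℕ} {a : ι → S}
    (h : ∀ g : ι → MvPolynomial ι S, (∀ i, g i = C (a i) ∨ g i = X i) →
      HasDepthAtLeast I (MvPolynomial ι S ⧸ Ideal.span (Set.range g)) n) :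
    HasDepthAtLeast I (MvPolynomial ι S ⧸ Ideal.span (Set.range fun i ↦ C (a i) * X i)) n := by
  refine hasDepthAtLeast_quotient_span_range_mul (fun i g hg ↦ isSMulRegular_X_quotient_span ?_) h
  rintro _ ⟨j, hj, rfl⟩
  have hC : C (a j) ∈ supported S {i}ᶜ := (supported S {i}ᶜ).algebraMap_mem (a j)
  have hX : (X j : MvPolynomial ι S) ∈ supported S {i}ᶜ := Algebra.subset_adjoin ⟨j, hj, rfl⟩
  rcases hg j with h | h | h <;> rw [h]
  exacts [mul_mem hC hX, hC, hX]

end ProductGenerators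

section IteratedPolynomialRing

variable (R ι σ : Type*) [CommRing R]

/-- The linear form in the variables of `R[σ][ι]` with prescribed coefficients. Working with this
linear map lets regular sequences be read off from bases of its source; the index set `ι ⊕ σ`
treats the inner and the outer variables alike. -/
noncomputable def linearForm : (ι ⊕ σ →₀ R) →ₗ[R] MvPolynomial ι (MvPolynomial σ R) :=
  (sumAlgEquiv R ι σ).toLinearMap ∘ₗ Finsupp.linearCombination R X

/-- The ideal of `R[σ][ι]` generated by the inner and the outer variables: the graded maximal ideal
when `R` is a field. -/
noncomputable def irrelevantIdeal : Ideal (MvPolynomial ι (MvPolynomial σ R)) :=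
  Ideal.span (Set.range (fun j ↦ C (X j)) ∪ Set.range X)

theorem isSymmetricAlgebra_linearForm : IsSymmetricAlgebra (linearForm R ι σ) := by
  refine .of_equiv ((SymmetricAlgebra.equivMvPolynomial Finsupp.basisSingleOne).trans
    (sumAlgEquiv R ι σ)) (Finsupp.lhom_ext' fun i ↦ LinearMap.ext_ring ?_)
  have hι := SymmetricAlgebra.equivMvPolynomial_ι_apply (Finsupp.basisSingleOne (R := R)) i
  rw [Finsupp.coe_basisSingleOne] at hι
  simp [linearForm, hι]

theorem range_linearForm : LinearMap.range (linearForm R ι σ) =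
    Submodule.span R (Set.range (fun j ↦ C (X j)) ∪ Set.range X) := by
  have hX : (sumAlgEquiv R ι σ).toLinearMap ∘ X = Sum.elim X (fun j ↦ C (X j)) :=
    funext (by rintro (i | j) <;> simp)
  rw [linearForm, LinearMap.range_comp, Finsupp.range_linearCombination, Submodule.map_span,
    ← Set.range_comp, hX, Set.Sum.elim_range, Set.union_comm]

variable {R ι σ}

theorem linearForm_mem_irrelevantIdeal (v : ι ⊕ σ →₀ R) :
    linearForm R ι σ v ∈ irrelevantIdeal R ι σ := by
  have hv : linearForm R ι σ v ∈ LinearMap.range (linearForm R ι σ) := ⟨v, rfl⟩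
  rw [range_linearForm] at hv
  exact Submodule.span_le_restrictScalars R _ _ hv

theorem irrelevantIdeal_ne_top [Nontrivial R] : irrelevantIdeal R ι σ ≠ ⊤ := by
  refine ne_top_of_le_ne_top (RingHom.ker_ne_top (constantCoeff.comp constantCoeff))
    (Ideal.span_le.mpr ?_)
  rintro _ (⟨j, rfl⟩ | ⟨i, rfl⟩) <;> simp

theorem X_mem_range_linearForm (i : ι) : X i ∈ LinearMap.range (linearForm R ι σ) := by
  rw [range_linearForm]
  exact Submodule.subset_span (.inr ⟨i, rfl⟩)

theorem C_mem_range_linearForm {p : MvPolynomial σ R} (hp : p.IsHomogeneous 1) :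
    C p ∈ LinearMap.range (linearForm R ι σ) := by
  have hspan : p ∈ Submodule.span R (Set.range X) := by
    rwa [← homogeneousSubmodule_one_eq_span_X, mem_homogeneousSubmodule]
  let toT := IsScalarTower.toAlgHom R (MvPolynomial σ R) (MvPolynomial ι (MvPolynomial σ R))
  have hmap := Submodule.mem_map_of_mem (f := toT.toLinearMap) hspan
  rw [Submodule.map_span, ← Set.range_comp] at hmap
  rw [range_linearForm]
  exact Submodule.span_mono Set.subset_union_left hmap

theorem hasDepthAtLeast_quotient_linear_mul_X {K : Type*} [Field K] [Finite ι] [Fintype σ]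
    {ℓ : ι → MvPolynomial σ K} (hℓ : ∀ i, (ℓ i).IsHomogeneous 1) :
    HasDepthAtLeast (irrelevantIdeal K ι σ) (MvPolynomial ι (MvPolynomial σ K) ⧸
      Ideal.span (Set.range fun i ↦ C (ℓ i) * X i)) (Fintype.card σ) := by
  have := Fintype.ofFinite ι
  refine hasDepthAtLeast_quotient_span_range_C_mul_X fun g hg ↦ ?_
  have hlinear (i : ι) : g i ∈ LinearMap.range (linearForm K ι σ) := by
    rcases hg i with h | h <;> rw [h]
    exacts [C_mem_range_linearForm (hℓ i), X_mem_range_linearForm i]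
  choose v hv using hlinear
  obtain rfl : linearForm K ι σ ∘ v = g := funext hv
  have hdepth := hasDepthAtLeast_quotient_span_range (isSymmetricAlgebra_linearForm K ι σ)
    irrelevantIdeal_ne_top linearForm_mem_irrelevantIdeal v
  simpa using hdepth

end IteratedPolynomialRing

/-- **Garrousian–Simis–Tohaneanu, Lemma 4.7**: for nonzero linear forms `ℓ_1, …, ℓ_n` in
`K[x_1,…,x_k]` (repetitions and proportional forms allowed), the quotient
`T/⟨ℓ_1 y_1, …, ℓ_n y_n⟩` of `T = K[x_1,…,x_k,y_1,…,y_n]` has depth at least `k` with respect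
to the graded maximal ideal: there is a regular sequence of length `k` on the quotient
consisting of elements of `⟨x_1,…,x_k,y_1,…,y_n⟩`. -/
theorem depth_of_monomial_like_quotient
    {K : Type*} [Field K] {k n : ℕ}
    (ℓ : Fin n → MvPolynomial (Fin k) K)
    (hhom : ∀ i, (ℓ i).IsHomogeneous 1)
    (hne : ∀ i, ℓ i ≠ 0)
    (J : Ideal (MvPolynomial (Fin n) (MvPolynomial (Fin k) K)))
    (hJ : J = Ideal.span (Set.range fun i : Fin n => C (ℓ i) * X i))
    (mx : Ideal (MvPolynomial (Fin n) (MvPolynomial (Fin k) K)))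
    (hmx : mx = Ideal.span
      ((Set.range fun j : Fin k => (C (X j) : MvPolynomial (Fin n) (MvPolynomial (Fin k) K))) ∪
        Set.range (X : Fin n → MvPolynomial (Fin n) (MvPolynomial (Fin k) K)))) :
    ∃ rs : List (MvPolynomial (Fin n) (MvPolynomial (Fin k) K)),
      rs.length = k ∧ (∀ r ∈ rs, r ∈ mx) ∧
      RingTheory.Sequence.IsRegular
        (MvPolynomial (Fin n) (MvPolynomial (Fin k) K) ⧸ J) rs := by
  obtain rfl : mx = irrelevantIdeal K (Fin n) (Fin k) := hmx
  subst hJ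
  have hle : Ideal.span (Set.range fun i ↦ C (ℓ i) * X i) ≤ irrelevantIdeal K (Fin n) (Fin k) := by
    refine Ideal.span_le.mpr ?_
    rintro _ ⟨i, rfl⟩
    exact Ideal.mul_mem_left _ _ (Ideal.subset_span (.inr ⟨i, rfl⟩))
  have hdepth := hasDepthAtLeast_quotient_linear_mul_X hhom
  rw [Fintype.card_fin] at hdepth
  exact hdepth.exists_isRegular (smul_top_quotient_ne_top hle irrelevantIdeal_ne_top)
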